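/- Classification of the stationary axisymmetric kernel (s = +2): A smooth function Φ : U → ℂ on U = {(r,z) : r > r₊, −1 < z < 1} satisfies Δ²∂_r⁴(Δ²Φ) = 0 and 𝒯₊₂ Φ = 0 everywhere on U if and only if there exists a (then unique) c = (c₁,…,c₈) ∈ ℂ⁸ such that Φ = Δ^{−2}·Φ_Ker(c) on U. That is, the s = +2 stationary axisymmetric kernel equals Δ^{−2} times the s = −2 one. -/

import Mathlib

noncomputable section

open ComplexConjugate Filter

namespace Kerr

/-- A point of the Boyer-Lindquist-type coordinate chart `(t, r, z, φ)`. -/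
abbrev Pt := Fin 4 → ℝ

/-- Partial derivative of a real-valued function on the chart. -/
def pd (i : Fin 4) (f : Pt → ℝ) (p : Pt) : ℝ :=
  fderiv ℝ f p (Pi.single i 1)

/-- Partial derivative of a complex-valued function on the chart. -/
def pdC (i : Fin 4) (f : Pt → ℂ) (p : Pt) : ℂ :=
  fderiv ℝ f p (Pi.single i 1)

/-- `Δ := r(r−2M)+a²` for the Kerr black hole with `M = 1`. -/
def Del (a r : ℝ) : ℝ := r * (r - 2) + a ^ 2

/-- `Σ := r² + a²z²`. -/
def Sig (a r z : ℝ) : ℝ := r ^ 2 + a ^ 2 * z ^ 2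

/-- Outer horizon radius `r₊ = 1 + √(1−a²)` (with `M = 1`). -/
def rplus (a : ℝ) : ℝ := 1 + Real.sqrt (1 - a ^ 2)

/-- Inner horizon radius `r₋ = 1 − √(1−a²)` (with `M = 1`). -/
def rminus (a : ℝ) : ℝ := 1 - Real.sqrt (1 - a ^ 2)

/-- The Kerr family of metrics, parametrized by mass `M` and angular momentum `J` (`a = J/M`),
in Boyer-Lindquist-type coordinates `(t,r,z,φ)`. -/
def gFam (M J : ℝ) (p : Pt) : Matrix (Fin 4) (Fin 4) ℝ :=
  Matrix.of
    ![![-(1 - 2 * M * p 1 / (p 1 ^ 2 + (J / M) ^ 2 * p 2 ^ 2)), 0, 0,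
        -(2 * M * (J / M) * p 1 * (1 - p 2 ^ 2) / (p 1 ^ 2 + (J / M) ^ 2 * p 2 ^ 2))],
      ![0, (p 1 ^ 2 + (J / M) ^ 2 * p 2 ^ 2) / (p 1 ^ 2 - 2 * M * p 1 + (J / M) ^ 2), 0, 0],
      ![0, 0, (p 1 ^ 2 + (J / M) ^ 2 * p 2 ^ 2) / (1 - p 2 ^ 2), 0],
      ![-(2 * M * (J / M) * p 1 * (1 - p 2 ^ 2) / (p 1 ^ 2 + (J / M) ^ 2 * p 2 ^ 2)), 0, 0,
        (1 - p 2 ^ 2) / (p 1 ^ 2 + (J / M) ^ 2 * p 2 ^ 2) *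
          (2 * (J / M) ^ 2 * M * p 1 * (1 - p 2 ^ 2)
            + ((J / M) ^ 2 + p 1 ^ 2) * (p 1 ^ 2 + (J / M) ^ 2 * p 2 ^ 2))]]

/-- The background Kerr metric with `M = 1` and spin `a`. -/
def g (a : ℝ) : Pt → Matrix (Fin 4) (Fin 4) ℝ := gFam 1 a

/-- Inverse Kerr metric. -/
def gInv (a : ℝ) (p : Pt) : Matrix (Fin 4) (Fin 4) ℝ := (g a p)⁻¹

/-- Christoffel symbols `Γ^l_{m n}` of the Kerr metric. -/
def Chr (a : ℝ) (l m n : Fin 4) (p : Pt) : ℝ :=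
  (1 / 2) * ∑ s : Fin 4, gInv a p l s *
    (pd m (fun q => g a q s n) p + pd n (fun q => g a q s m) p - pd s (fun q => g a q m n) p)

/-- Covariant derivative `(∇_c h)_{α β}` of a covariant 2-tensor field. -/
def covD2 (a : ℝ) (h : Pt → Matrix (Fin 4) (Fin 4) ℝ) (c α β : Fin 4) (p : Pt) : ℝ :=
  pd c (fun q => h q α β) p
    - ∑ s : Fin 4, Chr a s c α p * h p s β
    - ∑ s : Fin 4, Chr a s c β p * h p α s

/-- Covariant derivative `(∇_c T)_{α β γ}` of a covariant 3-tensor field. -/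
def covD3 (a : ℝ) (T : Fin 4 → Fin 4 → Fin 4 → Pt → ℝ) (c α β γ : Fin 4) (p : Pt) : ℝ :=
  pd c (fun q => T α β γ q) p
    - ∑ s : Fin 4, Chr a s c α p * T s β γ p
    - ∑ s : Fin 4, Chr a s c β p * T α s γ p
    - ∑ s : Fin 4, Chr a s c γ p * T α β s p

/-- The Killing vector `k = x ∂_t + y ∂_φ` of the Kerr background. -/
def kvec (x y : ℝ) : Fin 4 → ℝ := ![x, 0, 0, y]

/-- The lowered Killing covector `k_α`. -/
def kco (a x y : ℝ) (p : Pt) (α : Fin 4) : ℝ := ∑ s : Fin 4, g a p α s * kvec x y s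

/-- `∇_β k^λ` for the Killing vector `k = x ∂_t + y ∂_φ`. -/
def covDk (a x y : ℝ) (β l : Fin 4) (p : Pt) : ℝ :=
  pd β (fun _ => kvec x y l) p + ∑ s : Fin 4, Chr a l β s p * kvec x y s

/-- Trace-reversed metric perturbation `h̄_{αβ} = h_{αβ} − ½ g_{αβ} g^{λσ} h_{λσ}`. -/
def trRev (a : ℝ) (h : Pt → Matrix (Fin 4) (Fin 4) ℝ) (p : Pt) : Matrix (Fin 4) (Fin 4) ℝ :=
  Matrix.of fun α β =>
    h p α β - (1 / 2) * g a p α β * ∑ l : Fin 4, ∑ s : Fin 4, gInv a p l s * h p l s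

/-- Abbott–Deser 2-form `F_{αβ}[h, k]` (lowered indices) for the Killing vector
`k = x ∂_t + y ∂_φ`. -/
def ADform (a : ℝ) (h : Pt → Matrix (Fin 4) (Fin 4) ℝ) (x y : ℝ) (α β : Fin 4) (p : Pt) : ℝ :=
  (1 / (8 * Real.pi)) *
    ((1 / 2) * (∑ l : Fin 4, kvec x y l *
        (covD2 a (trRev a h) α β l p - covD2 a (trRev a h) β α l p))
    + (1 / 2) * (∑ l : Fin 4,
        (trRev a h p l α * covDk a x y β l p - trRev a h p l β * covDk a x y α l p))
    - (1 / 2) *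
        (kco a x y p α * ∑ l : Fin 4, ∑ s : Fin 4, gInv a p l s * covD2 a (trRev a h) s β l p
        - kco a x y p β * ∑ l : Fin 4, ∑ s : Fin 4, gInv a p l s * covD2 a (trRev a h) s α l p))

/-- Abbott–Deser 2-form with raised indices, `F^{αβ}[h,k]`. -/
def ADformUp (a : ℝ) (h : Pt → Matrix (Fin 4) (Fin 4) ℝ) (x y : ℝ) (α β : Fin 4) (p : Pt) : ℝ :=
  ∑ m : Fin 4, ∑ n : Fin 4, gInv a p α m * gInv a p β n * ADform a h x y m n p

/-- The Abbott–Deser charge density `ℱ[k] := Σ F^{rt}[h,k]`. -/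
def Fdens (a : ℝ) (h : Pt → Matrix (Fin 4) (Fin 4) ℝ) (x y : ℝ) (p : Pt) : ℝ :=
  Sig a (p 1) (p 2) * ADformUp a h x y 1 0 p

/-- The Abbott–Deser charge `Q[h, x∂_t + y∂_φ, S_{t,r}] = ∫₀^{2π}∫_{−1}^1 Σ F^{rt} dz dφ`. -/
def ADcharge (a : ℝ) (h : Pt → Matrix (Fin 4) (Fin 4) ℝ) (x y t r : ℝ) : ℝ :=
  ∫ φ in (0:ℝ)..(2 * Real.pi), ∫ z in (-1:ℝ)..(1:ℝ),
    Sig a r z * ADformUp a h x y 1 0 ![t, r, z, φ]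

/-! ### The Kinnersley tetrad and Newman-Penrose quantities -/

/-- The Newman–Penrose coefficient `ρ = −1/(r − i a z)`. -/
def rhoC (a : ℝ) (p : Pt) : ℂ := -1 / ((p 1 : ℂ) - Complex.I * (a : ℂ) * (p 2 : ℂ))

/-- Kinnersley tetrad leg `l^μ`. -/
def lvec (a : ℝ) (p : Pt) : Fin 4 → ℂ := fun i =>
  ((![(p 1 ^ 2 + a ^ 2) / Del a (p 1), 1, 0, a / Del a (p 1)] : Fin 4 → ℝ) i : ℂ)

/-- Kinnersley tetrad leg `n^μ`. -/
def nvec (a : ℝ) (p : Pt) : Fin 4 → ℂ := fun i =>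
  ((![(p 1 ^ 2 + a ^ 2) / (2 * Sig a (p 1) (p 2)), -Del a (p 1) / (2 * Sig a (p 1) (p 2)), 0,
      a / (2 * Sig a (p 1) (p 2))] : Fin 4 → ℝ) i : ℂ)

/-- Kinnersley tetrad leg `m^μ`. -/
def mvec (a : ℝ) (p : Pt) : Fin 4 → ℂ := fun i =>
  (-(conj (rhoC a p)) * (Real.sqrt (1 - p 2 ^ 2) : ℂ) / (Real.sqrt 2 : ℂ)) *
    (![Complex.I * (a : ℂ), 0, -1, Complex.I / (1 - (p 2 : ℂ) ^ 2)] i)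

/-- Kinnersley tetrad leg `m̄^μ`. -/
def mbvec (a : ℝ) (p : Pt) : Fin 4 → ℂ := fun i => conj (mvec a p i)

/-- Lowered tetrad covector `l_μ`. -/
def lco (a : ℝ) (p : Pt) (i : Fin 4) : ℂ := ∑ j : Fin 4, (g a p i j : ℂ) * lvec a p j

/-- Lowered tetrad covector `n_μ`. -/
def nco (a : ℝ) (p : Pt) (i : Fin 4) : ℂ := ∑ j : Fin 4, (g a p i j : ℂ) * nvec a p j

/-- Lowered tetrad covector `m_μ`. -/
def mco (a : ℝ) (p : Pt) (i : Fin 4) : ℂ := ∑ j : Fin 4, (g a p i j : ℂ) * mvec a p j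

/-- Lowered tetrad covector `m̄_μ`. -/
def mbco (a : ℝ) (p : Pt) (i : Fin 4) : ℂ := ∑ j : Fin 4, (g a p i j : ℂ) * mbvec a p j

/-- Newman–Penrose spin coefficient `μ = ρ²ρ̄Δ/2`. -/
def muNP (a : ℝ) (p : Pt) : ℂ := rhoC a p ^ 2 * conj (rhoC a p) * (Del a (p 1) : ℂ) / 2

/-- Newman–Penrose spin coefficient `τ = −iaρρ̄√(1−z²)/√2`. -/
def tauNP (a : ℝ) (p : Pt) : ℂ :=
  -Complex.I * (a : ℂ) * rhoC a p * conj (rhoC a p) * (Real.sqrt (1 - p 2 ^ 2) : ℂ)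
    / (Real.sqrt 2 : ℂ)

/-- Newman–Penrose spin coefficient `π = iaρ²√(1−z²)/√2`. -/
def piNP (a : ℝ) (p : Pt) : ℂ :=
  Complex.I * (a : ℂ) * rhoC a p ^ 2 * (Real.sqrt (1 - p 2 ^ 2) : ℂ) / (Real.sqrt 2 : ℂ)

/-- Newman–Penrose spin coefficient `γ = μ + ρρ̄(r−1)/2`. -/
def gamNP (a : ℝ) (p : Pt) : ℂ :=
  muNP a p + rhoC a p * conj (rhoC a p) * ((p 1 : ℂ) - 1) / 2

/-- Newman–Penrose spin coefficient `β = −ρ̄z/(2√2√(1−z²))`. -/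
def betNP (a : ℝ) (p : Pt) : ℂ :=
  -(conj (rhoC a p)) * (p 2 : ℂ) / (2 * (Real.sqrt 2 : ℂ) * (Real.sqrt (1 - p 2 ^ 2) : ℂ))

/-- Newman–Penrose spin coefficient `α = π − β̄`. -/
def alpNP (a : ℝ) (p : Pt) : ℂ := piNP a p - conj (betNP a p)

/-- Directional derivative along a (complex) vector field. -/
def dirD (v : Pt → Fin 4 → ℂ) (f : Pt → ℂ) (p : Pt) : ℂ := ∑ i : Fin 4, v p i * pdC i f p

/-- First-order operator `(v^μ ∂_μ + c)` acting on complex scalars. -/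
def opD (v : Pt → Fin 4 → ℂ) (c : Pt → ℂ) (f : Pt → ℂ) : Pt → ℂ :=
  fun p => dirD v f p + c p * f p

/-- The CCK operator `₊₂Ĥ_{μν}` applied to a Hertz potential `Φ`. -/
def Hplus (a : ℝ) (Φ : Pt → ℂ) (p : Pt) (i j : Fin 4) : ℂ :=
  -(rhoC a p) ^ (-4 : ℤ) *
    (lco a p i * lco a p j *
        opD (mbvec a) (fun q => -3 * alpNP a q - conj (betNP a q) + 5 * piNP a q)
          (opD (mbvec a) (fun q => -4 * alpNP a q + piNP a q) Φ) p
    + mco a p i * mco a p j *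
        opD (nvec a) (fun q => 5 * muNP a q - 3 * gamNP a q + conj (gamNP a q))
          (opD (nvec a) (fun q => muNP a q - 4 * gamNP a q) Φ) p
    - (1 / 2) * (lco a p i * mco a p j + lco a p j * mco a p i) *
        (opD (mbvec a)
            (fun q => -3 * alpNP a q + conj (betNP a q) + 5 * piNP a q + conj (tauNP a q))
            (opD (nvec a) (fun q => muNP a q - 4 * gamNP a q) Φ) p
        + opD (nvec a)
            (fun q => 5 * muNP a q - conj (muNP a q) - 3 * gamNP a q - conj (gamNP a q))
            (opD (mbvec a) (fun q => -4 * alpNP a q + piNP a q) Φ) p))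

/-- The CCK operator `₋₂Ĥ_{μν}` applied to a Hertz potential `Φ`. -/
def Hminus (a : ℝ) (Φ : Pt → ℂ) (p : Pt) (i j : Fin 4) : ℂ :=
  -(nco a p i * nco a p j *
        opD (mvec a) (fun q => conj (alpNP a q) + 3 * betNP a q - tauNP a q)
          (opD (mvec a) (fun q => 4 * betNP a q + 3 * tauNP a q) Φ) p
    + mbco a p i * mbco a p j *
        opD (lvec a) (fun q => -(rhoC a q))
          (opD (lvec a) (fun q => 3 * rhoC a q) Φ) p
    - (1 / 2) * (nco a p i * mbco a p j + nco a p j * mbco a p i) *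
        (opD (mvec a) (fun q => -2 * conj (alpNP a q) + 2 * betNP a q - tauNP a q)
            (opD (lvec a) (fun q => 3 * rhoC a q) Φ) p
        + opD (lvec a) (fun q => conj (rhoC a q) - rhoC a q)
            (opD (mvec a) (fun q => 4 * betNP a q + 3 * tauNP a q) Φ) p))

/-- `ₛĤ_{μν} Φ` for `s = ±2`. -/
def Hop (a : ℝ) (s : ℤ) (Φ : Pt → ℂ) (p : Pt) (i j : Fin 4) : ℂ :=
  if s = 2 then Hplus a Φ p i j else Hminus a Φ p i j

/-- The CCK metric perturbation `h^{CCK}[s,Φ]_{μν} := ₛĤ_{μν}Φ + c.c.`. -/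
def hCCK (a : ℝ) (s : ℤ) (Φ : Pt → ℂ) (p : Pt) : Matrix (Fin 4) (Fin 4) ℝ :=
  Matrix.of fun i j => (Hop a s Φ p i j + conj (Hop a s Φ p i j)).re

/-- The homogeneous spin-`s` Teukolsky operator on the Kerr exterior. -/
def Teuk (a : ℝ) (s : ℤ) (Φ : Pt → ℂ) (p : Pt) : ℂ :=
  -((((p 1 : ℂ) ^ 2 + (a : ℂ) ^ 2) ^ 2 / (Del a (p 1) : ℂ)
      - (a : ℂ) ^ 2 * (1 - (p 2 : ℂ) ^ 2)) * pdC 0 (pdC 0 Φ) p)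
  - (4 * (a : ℂ) * (p 1 : ℂ) / (Del a (p 1) : ℂ)) * pdC 0 (pdC 3 Φ) p
  - ((a : ℂ) ^ 2 / (Del a (p 1) : ℂ) - 1 / (1 - (p 2 : ℂ) ^ 2)) * pdC 3 (pdC 3 Φ) p
  + 2 * (s : ℂ) * (((p 1 : ℂ) ^ 2 - (a : ℂ) ^ 2) / (Del a (p 1) : ℂ) - (p 1 : ℂ)
      - Complex.I * (a : ℂ) * (p 2 : ℂ)) * pdC 0 Φ p
  + 2 * (s : ℂ) * ((a : ℂ) * ((p 1 : ℂ) - 1) / (Del a (p 1) : ℂ)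
      + Complex.I * (p 2 : ℂ) / (1 - (p 2 : ℂ) ^ 2)) * pdC 3 Φ p
  + (Del a (p 1) : ℂ) ^ (-s) *
      pdC 1 (fun q => (Del a (q 1) : ℂ) ^ (s + 1) * pdC 1 Φ q) p
  + pdC 2 (fun q => (1 - (q 2 : ℂ) ^ 2) * pdC 2 Φ q) p
  - (((s : ℂ) * ((s : ℂ) + 1) * (p 2 : ℂ) ^ 2 - (s : ℂ)) / (1 - (p 2 : ℂ) ^ 2)) * Φ p

/-- The exterior Kerr coordinate patch `{r > r₊, −1 < z < 1}`. -/
def ext (a : ℝ) : Set Pt := {p | rplus a < p 1 ∧ -1 < p 2 ∧ p 2 < 1}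

/-- The closed exterior patch `{r > r₊, −1 ≤ z ≤ 1}`. -/
def extCl (a : ℝ) : Set Pt := {p | rplus a < p 1 ∧ -1 ≤ p 2 ∧ p 2 ≤ 1}

/-- A Fourier mode Hertz potential `Φ(t,r,z,φ) = ψ(r,z) e^{i(mφ − ωt)}`. -/
def fourierMode (m : ℤ) (ω : ℝ) (ψ : ℝ → ℝ → ℂ) : Pt → ℂ :=
  fun p => ψ (p 1) (p 2) * Complex.exp (Complex.I * ((m : ℂ) * (p 3 : ℂ) - (ω : ℂ) * (p 0 : ℂ)))

/-- The 2D domain `U = {(r,z) : r > r₊, −1 < z < 1}`. -/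
def U2 (a : ℝ) : Set (ℝ × ℝ) := {q | rplus a < q.1 ∧ -1 < q.2 ∧ q.2 < 1}

/-- The closed 2D domain `{(r,z) : r > r₊, −1 ≤ z ≤ 1}`. -/
def U2cl (a : ℝ) : Set (ℝ × ℝ) := {q | rplus a < q.1 ∧ -1 ≤ q.2 ∧ q.2 ≤ 1}

/-- `∂_r` of a function of `(r, z)`. -/
def pdr2 (f : ℝ → ℝ → ℂ) : ℝ → ℝ → ℂ := fun r z => deriv (fun r' => f r' z) r

/-- `∂_z` of a function of `(r, z)`. -/
def pdz2 (f : ℝ → ℝ → ℂ) : ℝ → ℝ → ℂ := fun r z => deriv (fun z' => f r z') z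

/-- The stationary axisymmetric spin-`s` Teukolsky operator
`𝒯_s Φ := Δ^{−s}∂_r(Δ^{s+1}∂_rΦ) + ∂_z((1−z²)∂_zΦ) − ((s(s+1)z²−s)/(1−z²))Φ`. -/
def TeukSAS (a : ℝ) (s : ℤ) (ψ : ℝ → ℝ → ℂ) (r z : ℝ) : ℂ :=
  (Del a r : ℂ) ^ (-s) *
      deriv (fun r' => (Del a r' : ℂ) ^ (s + 1) * deriv (fun r'' => ψ r'' z) r') r
    + deriv (fun z' => ((1 - z' ^ 2 : ℝ) : ℂ) * deriv (fun z'' => ψ r z'') z') z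
    - (((s : ℂ) * ((s : ℂ) + 1) * (z : ℂ) ^ 2 - (s : ℂ)) / (1 - (z : ℂ) ^ 2)) * ψ r z


/-- The mass perturbation `h_M := ∂g^{Kerr}/∂M` at `M = 1`, `J = a`. -/
def hM (a : ℝ) (p : Pt) : Matrix (Fin 4) (Fin 4) ℝ :=
  Matrix.of fun i j => deriv (fun M => gFam M a p i j) 1

/-- The angular-momentum perturbation `h_J := ∂g^{Kerr}/∂J` at `M = 1`, `J = a`. -/
def hJ (a : ℝ) (p : Pt) : Matrix (Fin 4) (Fin 4) ℝ :=
  Matrix.of fun i j => deriv (fun J => gFam 1 J p i j) a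

/-- The eight-parameter family `Φ_Ker(c)` of stationary axisymmetric kernel elements
(`c 0, ..., c 7` correspond to `c₁, ..., c₈`). -/
def PhiKer (a : ℝ) (c : Fin 8 → ℂ) (r z : ℝ) : ℂ :=
  (1 - (z : ℂ) ^ 2)⁻¹ *
    (c 0
    + c 1 * ((r : ℂ) - 1) * (z : ℂ)
    + c 2 * (z : ℂ) * ((z : ℂ) ^ 2 - 3)
    + c 3 * ((r : ℂ) + ((r : ℂ) - 1) * (z : ℂ) ^ 2)
    + c 4 * ((r : ℂ) ^ 2 - (a : ℂ) ^ 2) * (z : ℂ)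
    + c 5 * (r : ℂ) * ((r : ℂ) * ((r : ℂ) - 3) + 3 * (a : ℂ) ^ 2)
    + c 6 * ((r : ℂ) ^ 2 + ((r : ℂ) ^ 2 - (a : ℂ) ^ 2) * (z : ℂ) ^ 2)
    + c 7 * (r : ℂ) * (z : ℂ) *
        (((r : ℂ) * ((r : ℂ) - 3) + 3 * (a : ℂ) ^ 2) * (z : ℂ) ^ 2
          - 3 * ((r : ℂ) * ((r : ℂ) + 4) - 4 * (a : ℂ) ^ 2)))

/-- `G(z) = −4(1−a²)r₊z(1−z²)/(2z² + r₊(1−z²))²`. -/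
def Gfun (a z : ℝ) : ℝ :=
  -4 * (1 - a ^ 2) * rplus a * z * (1 - z ^ 2) / (2 * z ^ 2 + rplus a * (1 - z ^ 2)) ^ 2

/-- Outward Abbott–Deser flux through the closed surface `C_ε⁺` around the segment
`r₁ ≤ r ≤ r₂` of the axis `z = 1`, in the slice `t = t₀`: two caps at `r = r₁, r₂`
and the tube at `z = 1 − ε`. -/
def axisFluxP (a : ℝ) (h : Pt → Matrix (Fin 4) (Fin 4) ℝ) (x y t r₁ r₂ ε : ℝ) : ℝ :=
  (∫ φ in (0:ℝ)..(2 * Real.pi), ∫ z in (1 - ε)..(1:ℝ),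
      Sig a r₂ z * ADformUp a h x y 1 0 ![t, r₂, z, φ])
  - (∫ φ in (0:ℝ)..(2 * Real.pi), ∫ z in (1 - ε)..(1:ℝ),
      Sig a r₁ z * ADformUp a h x y 1 0 ![t, r₁, z, φ])
  - (∫ φ in (0:ℝ)..(2 * Real.pi), ∫ r in r₁..r₂,
      Sig a r (1 - ε) * ADformUp a h x y 2 0 ![t, r, 1 - ε, φ])

/-- Outward Abbott–Deser flux through the closed surface `C_ε⁻` around the segment
`r₁ ≤ r ≤ r₂` of the axis `z = −1`. -/
def axisFluxM (a : ℝ) (h : Pt → Matrix (Fin 4) (Fin 4) ℝ) (x y t r₁ r₂ ε : ℝ) : ℝ :=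
  (∫ φ in (0:ℝ)..(2 * Real.pi), ∫ z in (-1:ℝ)..(-1 + ε),
      Sig a r₂ z * ADformUp a h x y 1 0 ![t, r₂, z, φ])
  - (∫ φ in (0:ℝ)..(2 * Real.pi), ∫ z in (-1:ℝ)..(-1 + ε),
      Sig a r₁ z * ADformUp a h x y 1 0 ![t, r₁, z, φ])
  + (∫ φ in (0:ℝ)..(2 * Real.pi), ∫ r in r₁..r₂,
      Sig a r (-1 + ε) * ADformUp a h x y 2 0 ![t, r, -1 + ε, φ])

/-- The statement that both limiting Abbott–Deser axis charges
`Q_axis^± [h, x∂_t + y∂_φ, r₁, r₂]` vanish. -/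
def axisChargesVanish (a : ℝ) (h : Pt → Matrix (Fin 4) (Fin 4) ℝ) : Prop :=
  ∀ x y t r₁ r₂ : ℝ, rplus a < r₁ → r₁ < r₂ →
    Tendsto (fun ε => axisFluxP a h x y t r₁ r₂ ε) (nhdsWithin 0 (Set.Ioi 0)) (nhds 0) ∧
    Tendsto (fun ε => axisFluxM a h x y t r₁ r₂ ε) (nhdsWithin 0 (Set.Ioi 0)) (nhds 0)

/-- Covariant Hessian `∇_α ∇_β f` of a scalar field. -/
def hess (a : ℝ) (f : Pt → ℝ) (α β : Fin 4) (p : Pt) : ℝ :=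
  pd α (fun q => pd β f q) p - ∑ s : Fin 4, Chr a s α β p * pd s f p

/-- The linearized Ricci tensor
`δR_{αβ}[h] = −½∇^λ∇_λ h_{αβ} − ½∇_α∇_β(g^{λσ}h_{λσ}) + ∇^λ∇_{(α}h_{β)λ}`. -/
def linRicci (a : ℝ) (h : Pt → Matrix (Fin 4) (Fin 4) ℝ) (α β : Fin 4) (p : Pt) : ℝ :=
  -(1 / 2) * (∑ l : Fin 4, ∑ s : Fin 4, gInv a p l s * covD3 a (covD2 a h) l s α β p)
  - (1 / 2) * hess a (fun q => ∑ l : Fin 4, ∑ s : Fin 4, gInv a q l s * h q l s) α β p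
  + (1 / 2) * ((∑ l : Fin 4, ∑ s : Fin 4, gInv a p l s * covD3 a (covD2 a h) s α β l p)
      + (∑ l : Fin 4, ∑ s : Fin 4, gInv a p l s * covD3 a (covD2 a h) s β α l p))


/-! For `Ψ = Δ² (1 − z²) Φ` the equation `𝒯₊₂ Φ = 0` has no zeroth-order term: it becomes
`Δ² ∂_r (Δ⁻¹ ∂_r Ψ) + (1 − z²)² ∂_z ((1 − z²)⁻¹ ∂_z Ψ) = 0`. The condition `∂_r⁴ (Δ² Φ) = 0` says
that `Ψ` is a cubic in `r` with coefficients depending on `z`. The radial operator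
`f ↦ Δ f'' − Δ' f'` maps cubics to cubics and is diagonalisable there, with eigenvalues
`0, −2, −2, 0`. The coefficients of `Ψ` in an eigenbasis therefore satisfy decoupled second-order
equations in `z`, each with two explicit polynomial solutions, which span all solutions by Abel's
identity for the Wronskian. The resulting `4 × 2` amplitudes depend linearly and bijectively on
`c`, and `Ψ` determines them because polynomials are determined by their values on an interval. -/

open Polynomial (X C)
open scoped Polynomial Topology

section PolynomialFunctions

variable {𝕜 E : Type*}

lemma exists_coeff_eq_interpolation [Field 𝕜] [AddCommGroup E] [Module 𝕜 E] {s : Set 𝕜}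
    (hs : s.Infinite) (n : ℕ) :
    ∃ (x : Fin n → 𝕜) (M : Matrix (Fin n) (Fin n) 𝕜), (∀ j, x j ∈ s) ∧
      ∀ (b : Fin n → E) (k : Fin n), b k = ∑ j, M k j • ∑ i : Fin n, x j ^ (i : ℕ) • b i := by
  let x : Fin n → 𝕜 := fun j => hs.natEmbedding s j
  have hx : Function.Injective x := fun j k hjk =>
    Fin.ext ((hs.natEmbedding s).injective (Subtype.ext hjk))
  have hdet : IsUnit (Matrix.vandermonde x).det :=
    (Matrix.det_vandermonde_ne_zero_iff.2 hx).isUnit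
  refine ⟨x, (Matrix.vandermonde x)⁻¹, fun j => (hs.natEmbedding s j).2, fun b k => ?_⟩
  calc b k = ∑ i, ((Matrix.vandermonde x)⁻¹ * Matrix.vandermonde x) k i • b i := by
        simp [Matrix.nonsing_inv_mul _ hdet, Matrix.one_apply]
    _ = ∑ j, (Matrix.vandermonde x)⁻¹ k j • ∑ i : Fin n, x j ^ (i : ℕ) • b i := by
        simp only [Matrix.mul_apply, Finset.sum_smul, Finset.smul_sum, Matrix.vandermonde_apply,
          mul_smul]
        exact Finset.sum_comm

lemma eq_of_forall_sum_pow_smul_eq [Field 𝕜] [AddCommGroup E] [Module 𝕜 E] {s : Set 𝕜}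
    (hs : s.Infinite) {n : ℕ} {b c : Fin n → E}
    (h : ∀ x ∈ s, ∑ i : Fin n, x ^ (i : ℕ) • b i = ∑ i : Fin n, x ^ (i : ℕ) • c i) : b = c := by
  obtain ⟨x, M, hx, hM⟩ := exists_coeff_eq_interpolation (E := E) hs n
  funext k
  rw [hM b k, hM c k]
  simp only [h _ (hx _)]

lemma contDiffOn_coeff_of_sum_pow_smul [NontriviallyNormedField 𝕜] [NormedAddCommGroup E]
    [NormedSpace 𝕜 E] {F : Type*} [NormedAddCommGroup F] [NormedSpace 𝕜 F] {s : Set 𝕜}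
    (hs : s.Infinite) {t : Set F} {n : ℕ} {m : WithTop ℕ∞} {b : Fin n → F → E}
    (h : ∀ x ∈ s, ContDiffOn 𝕜 m (fun y => ∑ i : Fin n, x ^ (i : ℕ) • b i y) t) (k : Fin n) :
    ContDiffOn 𝕜 m (b k) t := by
  obtain ⟨x, M, hx, hM⟩ := exists_coeff_eq_interpolation (E := E) hs n
  rw [funext fun y => hM (fun i => b i y) k]
  exact ContDiffOn.sum fun j _ => contDiffOn_const.smul (h (x j) (hx j))

variable [RCLike 𝕜] [NormedAddCommGroup E] [NormedSpace 𝕜 E]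

lemma hasDerivAt_sum_pow_smul {n : ℕ} (b : Fin (n + 1) → E) (x : 𝕜) :
    HasDerivAt (fun y => ∑ i : Fin (n + 1), y ^ (i : ℕ) • b i)
      (∑ i : Fin n, x ^ (i : ℕ) • ((i : 𝕜) + 1) • b i.succ) x := by
  simp only [Fin.sum_univ_succ (n := n), Fin.val_zero, pow_zero, one_smul, Fin.val_succ]
  refine (HasDerivAt.fun_sum fun (i : Fin n) _ => ?_).const_add (b 0)
  simpa [smul_smul, mul_comm] using (hasDerivAt_pow (i + 1 : ℕ) x).smul_const (b i.succ)

lemma exists_sum_pow_smul_iff_deriv {s : Set 𝕜} (hs : IsOpen s) (hs' : IsPreconnected s) {f : 𝕜 → E}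
    (hf : DifferentiableOn 𝕜 f s) (n : ℕ) :
    (∃ b : Fin n → E, ∀ x ∈ s, deriv f x = ∑ i : Fin n, x ^ (i : ℕ) • b i) ↔
      ∃ b : Fin (n + 1) → E, ∀ x ∈ s, f x = ∑ i : Fin (n + 1), x ^ (i : ℕ) • b i := by
  constructor
  · rintro ⟨b, hb⟩
    let B : E → Fin (n + 1) → E := fun e => Fin.cons e fun i : Fin n => ((i : 𝕜) + 1)⁻¹ • b i
    have hB : ∀ x, HasDerivAt (fun y : 𝕜 => ∑ i : Fin (n + 1), y ^ (i : ℕ) • B 0 i)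
        (∑ i : Fin n, x ^ (i : ℕ) • b i) x := fun x => by
      have hne (i : Fin n) : (i : 𝕜) + 1 ≠ 0 := Nat.cast_add_one_ne_zero _
      simpa [B, smul_smul, hne] using hasDerivAt_sum_pow_smul (B 0) x
    obtain ⟨e, he⟩ := hs.exists_eq_add_of_deriv_eq hs' hf
      (fun x _ => (hB x).differentiableAt.differentiableWithinAt)
      (fun x hx => (hb x hx).trans (hB x).deriv.symm)
    refine ⟨B e, fun x hx => ?_⟩
    simpa [Fin.sum_univ_succ, B, add_comm] using he hx
  · rintro ⟨b, hb⟩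
    refine ⟨fun i => ((i : 𝕜) + 1) • b i.succ, fun x hx => ?_⟩
    rw [(Set.EqOn.eventuallyEq_of_mem hb (hs.mem_nhds hx)).deriv_eq,
      (hasDerivAt_sum_pow_smul b x).deriv]

lemma iterate_deriv_eq_zero_iff_exists_sum_pow_smul {s : Set 𝕜} (hs : IsOpen s)
    (hs' : IsPreconnected s) {n : ℕ} {f : 𝕜 → E} (hf : ContDiffOn 𝕜 n f s) :
    (∀ x ∈ s, deriv^[n] f x = 0) ↔
      ∃ b : Fin n → E, ∀ x ∈ s, f x = ∑ i : Fin n, x ^ (i : ℕ) • b i := by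
  induction n generalizing f with
  | zero => simp
  | succ n ih =>
    push_cast at hf
    simp only [Function.iterate_succ_apply]
    rw [ih (hf.deriv_of_isOpen hs le_rfl),
      exists_sum_pow_smul_iff_deriv hs hs' (hf.differentiableOn (by simp))]

end PolynomialFunctions

section ReducedOperator

variable {𝕜 A : Type*} [NontriviallyNormedField 𝕜] [NontriviallyNormedField A] [NormedAlgebra 𝕜 A]

/-- The operator `f ↦ p² (f' / p)' = p f'' − p' f'`. The two variables of the Teukolsky equation
separate into two copies of it, one with `p = Δ` and one with `p = 1 − z²`. -/
def reducedOp (p f : 𝕜 → A) (x : 𝕜) : A :=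
  p x * deriv (deriv f) x - deriv p x * deriv f x

/-- The Wronskian `f g' − f' g`. -/
def wronskian (f g : 𝕜 → A) (x : 𝕜) : A :=
  f x * deriv g x - deriv f x * g x

variable {p f g : 𝕜 → A} {x : 𝕜}

lemma differentiableAt_deriv_of_contDiffAt (hf : ContDiffAt 𝕜 2 f x) :
    DifferentiableAt 𝕜 (deriv f) x :=
  (hf.derivWithin (m := 1) (by norm_num)).differentiableAt (by simp)

lemma reducedOp_congr (h : f =ᶠ[𝓝 x] g) : reducedOp p f x = reducedOp p g x := by
  rw [reducedOp, reducedOp, h.deriv.deriv_eq, h.deriv_eq]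

lemma reducedOp_const_mul (c : A) : reducedOp p (fun y => c * f y) x = c * reducedOp p f x := by
  simp only [reducedOp, deriv_const_mul_field', deriv_const_mul_field]
  ring

lemma reducedOp_sum_const_mul {ι : Type*} [Fintype ι] (c : ι → A) {f : ι → 𝕜 → A}
    (hf : ∀ i, ContDiffAt 𝕜 2 (f i) x) :
    reducedOp p (fun y => ∑ i, c i * f i y) x = ∑ i, c i * reducedOp p (f i) x := by
  have hderiv : deriv (fun y => ∑ i, c i * f i y) =ᶠ[𝓝 x] fun y => ∑ i, c i * deriv (f i) y := by
    filter_upwards [Filter.eventually_all.2 fun i => (hf i).eventually (by simp)] with y hy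
    rw [deriv_fun_sum fun i _ => ((hy i).differentiableAt (by simp)).const_mul (c i)]
    simp only [deriv_const_mul_field]
  have hderiv₂ : deriv (deriv fun y => ∑ i, c i * f i y) x = ∑ i, c i * deriv (deriv (f i)) x := by
    rw [hderiv.deriv_eq,
      deriv_fun_sum fun i _ => (differentiableAt_deriv_of_contDiffAt (hf i)).const_mul (c i)]
    simp only [deriv_const_mul_field]
  rw [reducedOp, hderiv₂, hderiv.eq_of_nhds, Finset.mul_sum, Finset.mul_sum,
    ← Finset.sum_sub_distrib]
  exact Finset.sum_congr rfl fun i _ => by rw [reducedOp]; ring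

lemma deriv_deriv_mul (hf : ContDiffAt 𝕜 2 f x) (hg : ContDiffAt 𝕜 2 g x) :
    deriv (deriv fun y => f y * g y) x =
      deriv (deriv f) x * g x + 2 * (deriv f x * deriv g x) + f x * deriv (deriv g) x := by
  have hderiv : deriv (fun y => f y * g y) =ᶠ[𝓝 x] fun y => deriv f y * g y + f y * deriv g y := by
    filter_upwards [hf.eventually (by simp), hg.eventually (by simp)] with y hfy hgy
    exact deriv_fun_mul (hfy.differentiableAt (by simp)) (hgy.differentiableAt (by simp))
  have hf₁ := hf.differentiableAt (by simp)
  have hg₁ := hg.differentiableAt (by simp)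
  have hf₂ := differentiableAt_deriv_of_contDiffAt hf
  have hg₂ := differentiableAt_deriv_of_contDiffAt hg
  rw [hderiv.deriv_eq, deriv_fun_add (hf₂.fun_mul hg₁) (hf₁.fun_mul hg₂),
    deriv_fun_mul hf₂ hg₁, deriv_fun_mul hf₁ hg₂]
  ring

lemma reducedOp_mul (hf : ContDiffAt 𝕜 2 f x) (hg : ContDiffAt 𝕜 2 g x) :
    reducedOp p (fun y => f y * g y) x =
      f x * reducedOp p g x + reducedOp p f x * g x + 2 * p x * (deriv f x * deriv g x) := by
  rw [reducedOp, deriv_deriv_mul hf hg,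
    deriv_fun_mul (hf.differentiableAt (by simp)) (hg.differentiableAt (by simp)), reducedOp,
    reducedOp]
  ring

lemma reducedOp_self_mul (hp : ContDiffAt 𝕜 2 p x) (hf : ContDiffAt 𝕜 2 f x) :
    reducedOp p (fun y => p y * f y) x =
      p x * deriv (fun y => p y * deriv f y) x
        + (p x * deriv (deriv p) x - deriv p x ^ 2) * f x := by
  rw [reducedOp_mul hp hf, deriv_fun_mul (hp.differentiableAt (by simp))
    (differentiableAt_deriv_of_contDiffAt hf), reducedOp, reducedOp]
  ring

lemma reducedOp_sq_mul (hp : ContDiffAt 𝕜 2 p x) (hf : ContDiffAt 𝕜 2 f x) :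
    reducedOp p (fun y => p y ^ 2 * f y) x =
      p x ^ 2 * (p x * deriv (deriv f) x + 3 * deriv p x * deriv f x
        + 2 * deriv (deriv p) x * f x) := by
  simp only [pow_two, mul_assoc]
  rw [reducedOp_mul hp (hp.mul hf), reducedOp_mul hp hf,
    deriv_fun_mul (hp.differentiableAt (by simp)) (hf.differentiableAt (by simp)), reducedOp,
    reducedOp]
  ring

lemma zpow_neg_mul_deriv_zpow_mul_deriv (hp : DifferentiableAt 𝕜 p x) (hpx : p x ≠ 0)
    (hf : ContDiffAt 𝕜 2 f x) (s : ℤ) :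
    p x ^ (-s) * deriv (fun y => p y ^ (s + 1) * deriv f y) x =
      p x * deriv (deriv f) x + (s + 1) * deriv p x * deriv f x := by
  have hpow : HasDerivAt (fun y => p y ^ (s + 1)) ((s + 1) * p x ^ s * deriv p x) x :=
    ((hasDerivAt_zpow (s + 1) (p x) (Or.inl hpx)).comp x hp.hasDerivAt).congr_deriv (by simp)
  rw [(hpow.fun_mul (differentiableAt_deriv_of_contDiffAt hf).hasDerivAt).deriv, zpow_neg,
    zpow_add_one₀ hpx]
  field_simp
  ring

lemma hasDerivAt_wronskian (hf : ContDiffAt 𝕜 2 f x) (hg : ContDiffAt 𝕜 2 g x) :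
    HasDerivAt (wronskian f g) (f x * deriv (deriv g) x - deriv (deriv f) x * g x) x := by
  have hf₁ := (hf.differentiableAt (by simp)).hasDerivAt
  have hg₁ := (hg.differentiableAt (by simp)).hasDerivAt
  have hf₂ := (differentiableAt_deriv_of_contDiffAt hf).hasDerivAt
  have hg₂ := (differentiableAt_deriv_of_contDiffAt hg).hasDerivAt
  exact ((hf₁.fun_mul hg₂).fun_sub (hf₂.fun_mul hg₁)).congr_deriv (by ring)

end ReducedOperator

section Abel

variable {𝕜 A : Type*} [RCLike 𝕜] [NontriviallyNormedField A] [NormedAlgebra 𝕜 A]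
  {s : Set 𝕜} {p m f g u v : 𝕜 → A}

lemma exists_wronskian_eq_const_mul (hs : IsOpen s) (hs' : IsPreconnected s)
    (hp : DifferentiableOn 𝕜 p s) (hp₀ : ∀ x ∈ s, p x ≠ 0)
    (hf : ContDiffOn 𝕜 2 f s) (hg : ContDiffOn 𝕜 2 g s)
    (hfm : ∀ x ∈ s, reducedOp p f x = m x * f x) (hgm : ∀ x ∈ s, reducedOp p g x = m x * g x) :
    ∃ k : A, ∀ x ∈ s, wronskian f g x = k * p x := by
  have hquot : ∀ x ∈ s, HasDerivAt (fun y => wronskian f g y / p y) 0 x := fun x hx => by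
    have hx' := hs.mem_nhds hx
    refine ((hasDerivAt_wronskian (hf.contDiffAt hx') (hg.contDiffAt hx')).fun_div
      (hp.hasDerivAt hx') (hp₀ x hx)).congr_deriv (div_eq_zero_iff.2 (Or.inl ?_))
    have hfx := hfm x hx
    have hgx := hgm x hx
    rw [reducedOp] at hfx hgx
    rw [wronskian]
    linear_combination f x * hgx - g x * hfx
  obtain ⟨k, hk⟩ := hs.exists_is_const_of_deriv_eq_zero hs'
    (fun x hx => (hquot x hx).differentiableAt.differentiableWithinAt)
    (fun x hx => (hquot x hx).deriv)
  exact ⟨k, fun x hx => (div_eq_iff (hp₀ x hx)).1 (hk x hx)⟩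

lemma exists_eq_add_of_reducedOp_eq (hs : IsOpen s) (hs' : IsPreconnected s)
    (hp : DifferentiableOn 𝕜 p s) (hp₀ : ∀ x ∈ s, p x ≠ 0)
    (hu : ContDiffOn 𝕜 2 u s) (hv : ContDiffOn 𝕜 2 v s) (hf : ContDiffOn 𝕜 2 f s)
    (hum : ∀ x ∈ s, reducedOp p u x = m x * u x) (hvm : ∀ x ∈ s, reducedOp p v x = m x * v x)
    (hfm : ∀ x ∈ s, reducedOp p f x = m x * f x) {k : A} (hk : k ≠ 0)
    (huv : ∀ x ∈ s, wronskian u v x = k * p x) :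
    ∃ α β : A, ∀ x ∈ s, f x = α * u x + β * v x := by
  obtain ⟨α, hα⟩ := exists_wronskian_eq_const_mul hs hs' hp hp₀ hf hv hfm hvm
  obtain ⟨β, hβ⟩ := exists_wronskian_eq_const_mul hs hs' hp hp₀ hu hf hum hfm
  refine ⟨α / k, β / k, fun x hx => ?_⟩
  have hcramer : f x * wronskian u v x = u x * wronskian f v x + v x * wronskian u f x := by
    simp only [wronskian]
    ring
  rw [huv x hx, hα x hx, hβ x hx] at hcramer
  refine mul_right_cancel₀ (mul_ne_zero hk (hp₀ x hx)) ?_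
  field_simp
  linear_combination hcramer

end Abel

section RealEval

/-- The function of a real variable defined by a complex polynomial. -/
def realEval (P : ℂ[X]) (x : ℝ) : ℂ := P.eval (x : ℂ)

lemma deriv_realEval (P : ℂ[X]) : deriv (realEval P) = realEval P.derivative :=
  funext fun x => (P.hasDerivAt (x : ℂ)).comp_ofReal.deriv

lemma contDiff_realEval (P : ℂ[X]) {n : WithTop ℕ∞} : ContDiff ℝ n (realEval P) := by
  have hP : ContDiff ℂ n fun w => P.eval w := by
    simpa only [Polynomial.coe_aeval_eq_eval] using P.contDiff_aeval (𝕜 := ℂ) n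
  exact (hP.restrict_scalars ℝ).comp Complex.ofRealCLM.contDiff

lemma eq_of_eqOn_realEval {P Q : ℂ[X]} {s : Set ℝ} (hs : s.Infinite)
    (h : Set.EqOn (realEval P) (realEval Q) s) : P = Q := by
  refine Polynomial.eq_of_infinite_eval_eq P Q
    ((hs.image Complex.ofReal_injective.injOn).mono ?_)
  rintro _ ⟨x, hx, rfl⟩
  exact h hx

lemma reducedOp_realEval (p P : ℂ[X]) (x : ℝ) :
    reducedOp (realEval p) (realEval P) x =
      realEval (p * P.derivative.derivative - p.derivative * P.derivative) x := by
  simp only [reducedOp, deriv_realEval, realEval, Polynomial.eval_sub, Polynomial.eval_mul]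

lemma wronskian_realEval (P Q : ℂ[X]) (x : ℝ) :
    wronskian (realEval P) (realEval Q) x = realEval (P.wronskian Q) x := by
  simp only [wronskian, Polynomial.wronskian, deriv_realEval, realEval, Polynomial.eval_sub,
    Polynomial.eval_mul]

end RealEval

section Separation

/-- `Δ` as a polynomial in `r`. -/
def delPoly (a : ℝ) : ℂ[X] := X * (X - 2) + C ((a : ℂ) ^ 2)

/-- The angular weight `1 − z²`, which is `sin² θ` for `z = cos θ`, as a polynomial in `z`. -/
def sinSqPoly : ℂ[X] := 1 - X ^ 2

/-- The rescaled unknown `Δ² (1 − z²) Φ`, in which the Teukolsky equation has no zeroth-order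
term. -/
def reducedPotential (a : ℝ) (Φ : ℝ → ℝ → ℂ) (r z : ℝ) : ℂ :=
  (Del a r : ℂ) ^ 2 * ((1 - (z : ℂ) ^ 2) * Φ r z)

/-- The operator `Δ² ∂_r (Δ⁻¹ ∂_r) + (1 − z²)² ∂_z ((1 − z²)⁻¹ ∂_z)`. -/
def separatedOp (a : ℝ) (Ψ : ℝ → ℝ → ℂ) (r z : ℝ) : ℂ :=
  reducedOp (realEval (delPoly a)) (fun r' => Ψ r' z) r + reducedOp (realEval sinSqPoly) (Ψ r) z

variable {a r z : ℝ} {Φ : ℝ → ℝ → ℂ}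

lemma realEval_delPoly (a r : ℝ) : realEval (delPoly a) r = (Del a r : ℂ) := by
  simp [realEval, delPoly, Del]

lemma realEval_sinSqPoly (z : ℝ) : realEval sinSqPoly z = 1 - (z : ℂ) ^ 2 := by
  simp [realEval, sinSqPoly]

lemma derivative_delPoly (a : ℝ) : (delPoly a).derivative = 2 * X - 2 := by
  rw [delPoly, Polynomial.derivative_add, Polynomial.derivative_C, Polynomial.derivative_mul,
    Polynomial.derivative_sub, Polynomial.derivative_X, Polynomial.derivative_ofNat]
  ring

lemma derivative_sinSqPoly : sinSqPoly.derivative = -2 * X := by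
  rw [sinSqPoly, Polynomial.derivative_sub, Polynomial.derivative_one, Polynomial.derivative_X_sq,
    map_ofNat]
  ring

lemma reducedOp_reducedPotential_radial (hΦ : ContDiffAt ℝ 2 (fun r' => Φ r' z) r) :
    reducedOp (realEval (delPoly a)) (fun r' => reducedPotential a Φ r' z) r =
      (1 - (z : ℂ) ^ 2) * ((Del a r : ℂ) ^ 2 *
        ((Del a r : ℂ) * deriv (deriv fun r' => Φ r' z) r
          + 3 * (2 * r - 2) * deriv (fun r' => Φ r' z) r + 4 * Φ r z)) := by
  simp only [reducedPotential, mul_left_comm _ (1 - (z : ℂ) ^ 2), ← realEval_delPoly]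
  rw [reducedOp_const_mul, reducedOp_sq_mul (contDiff_realEval _).contDiffAt hΦ]
  have hderiv : deriv (realEval (delPoly a)) r = 2 * r - 2 := by
    simp [deriv_realEval, derivative_delPoly, realEval]
  have hderiv₂ : deriv (deriv (realEval (delPoly a))) r = 2 := by
    simp [deriv_realEval, derivative_delPoly, realEval]
  rw [hderiv, hderiv₂]
  ring

lemma reducedOp_reducedPotential_angular (hΦ : ContDiffAt ℝ 2 (Φ r) z) :
    reducedOp (realEval sinSqPoly) (reducedPotential a Φ r) z =
      (Del a r : ℂ) ^ 2 *
        ((1 - (z : ℂ) ^ 2) * deriv (fun z' : ℝ => (1 - (z' : ℂ) ^ 2) * deriv (Φ r) z') z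
          - (2 + 2 * (z : ℂ) ^ 2) * Φ r z) := by
  unfold reducedPotential
  simp only [← realEval_sinSqPoly]
  rw [reducedOp_const_mul, reducedOp_self_mul (contDiff_realEval _).contDiffAt hΦ]
  have hderiv : deriv (realEval sinSqPoly) z = -2 * z := by
    simp [deriv_realEval, derivative_sinSqPoly, realEval]
  have hderiv₂ : deriv (deriv (realEval sinSqPoly)) z = -2 := by
    simp [deriv_realEval, derivative_sinSqPoly, realEval]
  rw [hderiv, hderiv₂, realEval_sinSqPoly]
  ring

lemma mul_TeukSAS_two_eq_separatedOp (hr : Del a r ≠ 0) (hz : 1 - z ^ 2 ≠ 0)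
    (hΦr : ContDiffAt ℝ 2 (fun r' => Φ r' z) r) (hΦz : ContDiffAt ℝ 2 (Φ r) z) :
    (Del a r : ℂ) ^ 2 * ((1 - (z : ℂ) ^ 2) * TeukSAS a 2 Φ r z) =
      separatedOp a (reducedPotential a Φ) r z := by
  have hz' : 1 - (z : ℂ) ^ 2 ≠ 0 := mod_cast hz
  have hradial := zpow_neg_mul_deriv_zpow_mul_deriv
    (p := realEval (delPoly a)) ((contDiff_realEval _ (n := 1)).differentiable (by simp) r)
    (by simpa [realEval_delPoly] using hr) hΦr 2
  have hderiv : deriv (realEval (delPoly a)) r = 2 * r - 2 := by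
    simp [deriv_realEval, derivative_delPoly, realEval]
  simp only [realEval_delPoly, hderiv] at hradial
  rw [separatedOp, reducedOp_reducedPotential_radial hΦr, reducedOp_reducedPotential_angular hΦz,
    TeukSAS, hradial]
  push_cast
  field_simp
  ring

end Separation

section Modes

/-- A basis of the polynomials of degree at most three in `r` that diagonalises
`f ↦ Δ f'' − Δ' f'`. -/
def radialMode (a : ℝ) : Fin 4 → ℂ[X] :=
  ![1, X - 1, X ^ 2 - C ((a : ℂ) ^ 2), X * (X * (X - 3) + C (3 * (a : ℂ) ^ 2))]

/-- The separation constants: minus the eigenvalues of the radial modes. -/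
def sepConst : Fin 4 → ℂ := ![0, 2, 2, 0]

/-- For each separation constant, two independent solutions of the angular equation
`(1 − z²) v'' + 2 z v' = μ v`. -/
def angularMode : Fin 4 → Fin 2 → ℂ[X] :=
  ![![1, X * (X ^ 2 - 3)], ![X, 1 + X ^ 2], ![X, 1 + X ^ 2], ![1, X * (X ^ 2 - 3)]]

/-- The superposition of the separated solutions of amplitudes `c`. -/
def modeSum (a : ℝ) (c : Fin 4 → Fin 2 → ℂ) (r z : ℝ) : ℂ :=
  ∑ i, realEval (radialMode a i) r * ∑ j, c i j * realEval (angularMode i j) z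

/-- The passage from monomial coefficients to radial mode coefficients. -/
def radialCoord (a : ℝ) : (Fin 4 → ℂ) ≃ (Fin 4 → ℂ) where
  toFun b := ![b 0 + b 1 + a ^ 2 * b 2, b 1 - 3 * a ^ 2 * b 3, b 2 + 3 * b 3, b 3]
  invFun v := ![v 0 - v 1 - a ^ 2 * v 2, v 1 + 3 * a ^ 2 * v 3, v 2 - 3 * v 3, v 3]
  left_inv b := by
    ext k
    fin_cases k <;> simp
    ring
  right_inv v := by
    ext k
    fin_cases k <;> simp
    ring

lemma contDiff_radialCoord (a : ℝ) {n : WithTop ℕ∞} : ContDiff ℝ n (radialCoord a) := by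
  refine contDiff_pi.2 fun i => ?_
  fin_cases i <;> dsimp [radialCoord] <;> fun_prop

lemma sum_radialCoord_mul_radialMode (a : ℝ) (b : Fin 4 → ℂ) (r : ℝ) :
    ∑ i, realEval (radialMode a i) r * radialCoord a b i = ∑ i : Fin 4, r ^ (i : ℕ) • b i := by
  simp [Fin.sum_univ_four, radialMode, radialCoord, realEval]
  ring

lemma reducedOp_radialMode (a : ℝ) (i : Fin 4) (r : ℝ) :
    reducedOp (realEval (delPoly a)) (realEval (radialMode a i)) r =
      -sepConst i * realEval (radialMode a i) r := by
  rw [reducedOp_realEval, derivative_delPoly]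
  fin_cases i <;>
    simp [radialMode, sepConst, delPoly, realEval, Polynomial.derivative_pow] <;> ring

lemma reducedOp_angularMode (i : Fin 4) (j : Fin 2) (z : ℝ) :
    reducedOp (realEval sinSqPoly) (realEval (angularMode i j)) z =
      sepConst i * realEval (angularMode i j) z := by
  rw [reducedOp_realEval, derivative_sinSqPoly]
  fin_cases i <;> fin_cases j <;>
    simp [angularMode, sepConst, sinSqPoly, realEval] <;> ring

lemma wronskian_angularMode (i : Fin 4) (z : ℝ) :
    wronskian (realEval (angularMode i 0)) (realEval (angularMode i 1)) z =
      ![-3, -1, -1, -3] i * realEval sinSqPoly z := by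
  rw [wronskian_realEval, Polynomial.wronskian]
  fin_cases i <;> simp [angularMode, sinSqPoly, realEval] <;> ring

end Modes

section Classification

variable {a : ℝ} {s t : Set ℝ} {Ψ : ℝ → ℝ → ℂ}

lemma eq_of_sum_radialMode_mul_eq (hs : s.Infinite) {u v : Fin 4 → ℂ}
    (h : ∀ r ∈ s, ∑ i, realEval (radialMode a i) r * u i = ∑ i, realEval (radialMode a i) r * v i) :
    u = v := by
  refine (radialCoord a).symm.injective (eq_of_forall_sum_pow_smul_eq hs fun r hr => ?_)
  simpa only [← sum_radialCoord_mul_radialMode a, Equiv.apply_symm_apply] using h r hr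

lemma contDiffOn_of_sum_radialMode_mul (hs : s.Infinite) {n : WithTop ℕ∞} {v : Fin 4 → ℝ → ℂ}
    (h : ∀ r ∈ s, ContDiffOn ℝ n (fun z => ∑ i, realEval (radialMode a i) r * v i z) t)
    (i : Fin 4) : ContDiffOn ℝ n (v i) t := by
  let b : Fin 4 → ℝ → ℂ := fun k z => (radialCoord a).symm (fun i => v i z) k
  have hvb : ∀ z, radialCoord a (fun k => b k z) = fun i => v i z := fun z =>
    (radialCoord a).apply_symm_apply _
  have hb (k : Fin 4) : ContDiffOn ℝ n (b k) t := by
    refine contDiffOn_coeff_of_sum_pow_smul hs (fun r hr => ?_) k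
    simpa only [← sum_radialCoord_mul_radialMode a, hvb] using h r hr
  exact (contDiffOn_pi.1 ((contDiff_radialCoord a).comp_contDiffOn (contDiffOn_pi.2 hb)) i).congr
    fun z _ => (congrFun (hvb z) i).symm

lemma eq_of_sum_mul_angularMode_eq (ht : t.Infinite) {i : Fin 4} {c d : Fin 2 → ℂ}
    (h : ∀ z ∈ t, ∑ j, c j * realEval (angularMode i j) z =
      ∑ j, d j * realEval (angularMode i j) z) : c = d := by
  have heq : ∑ j, C (c j) * angularMode i j = ∑ j, C (d j) * angularMode i j :=
    eq_of_eqOn_realEval ht fun z hz => by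
      simpa only [realEval, Polynomial.eval_finsetSum, Polynomial.eval_mul, Polynomial.eval_C]
        using h z hz
  have heval₀ := congrArg (Polynomial.eval 0) heq
  have heval₁ := congrArg (Polynomial.eval 1) heq
  ext j
  fin_cases i <;> simp [angularMode] at heval₀ heval₁ <;> fin_cases j <;> grind

lemma separatedOp_eq_zero_iff (hs : IsOpen s) (hs₀ : s.Nonempty) (ht : IsOpen t)
    {v : Fin 4 → ℝ → ℂ} (hv : ∀ i, ContDiffOn ℝ 2 (v i) t)
    (hΨ : ∀ r ∈ s, ∀ z ∈ t, Ψ r z = ∑ i, realEval (radialMode a i) r * v i z) :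
    (∀ r ∈ s, ∀ z ∈ t, separatedOp a Ψ r z = 0) ↔
      ∀ i, ∀ z ∈ t, reducedOp (realEval sinSqPoly) (v i) z = sepConst i * v i z := by
  have hsep : ∀ r ∈ s, ∀ z ∈ t, separatedOp a Ψ r z =
      ∑ i, realEval (radialMode a i) r *
        (reducedOp (realEval sinSqPoly) (v i) z - sepConst i * v i z) := fun r hr z hz => by
    have hradial : (fun r' => Ψ r' z) =ᶠ[𝓝 r]
        fun r' => ∑ i, v i z * realEval (radialMode a i) r' := by
      filter_upwards [hs.mem_nhds hr] with r' hr'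
      simpa only [mul_comm] using hΨ r' hr' z hz
    have hangular : Ψ r =ᶠ[𝓝 z] fun z' => ∑ i, realEval (radialMode a i) r * v i z' :=
      Set.EqOn.eventuallyEq_of_mem (hΨ r hr) (ht.mem_nhds hz)
    rw [separatedOp, reducedOp_congr hradial, reducedOp_congr hangular,
      reducedOp_sum_const_mul _ fun i => (contDiff_realEval _).contDiffAt,
      reducedOp_sum_const_mul _ fun i => (hv i).contDiffAt (ht.mem_nhds hz),
      ← Finset.sum_add_distrib]
    refine Finset.sum_congr rfl fun i _ => ?_
    rw [reducedOp_radialMode]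
    ring
  have hs_inf : s.Infinite := infinite_of_mem_nhds _ (hs.mem_nhds hs₀.some_mem)
  refine ⟨fun h i z hz => ?_, fun h r hr z hz => ?_⟩
  · refine congrFun (eq_of_sum_radialMode_mul_eq (a := a)
      (u := fun i => reducedOp (realEval sinSqPoly) (v i) z) (v := fun i => sepConst i * v i z)
      hs_inf fun r hr => ?_) i
    rw [← sub_eq_zero, ← Finset.sum_sub_distrib, ← h r hr z hz, hsep r hr z hz]
    simp only [mul_sub]
  · rw [hsep r hr z hz]
    exact Finset.sum_eq_zero fun i _ => by rw [h i z hz, sub_self, mul_zero]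

lemma reducedOp_sinSqPoly_eq_iff (ht : IsOpen t) (ht' : IsPreconnected t)
    (hw : ∀ z ∈ t, 1 - z ^ 2 ≠ 0) {v : ℝ → ℂ} (hv : ContDiffOn ℝ 2 v t) (i : Fin 4) :
    (∀ z ∈ t, reducedOp (realEval sinSqPoly) v z = sepConst i * v z) ↔
      ∃ c : Fin 2 → ℂ, ∀ z ∈ t, v z = ∑ j, c j * realEval (angularMode i j) z := by
  constructor
  · intro h
    have hk : (![-3, -1, -1, -3] : Fin 4 → ℂ) i ≠ 0 := by fin_cases i <;> simp
    obtain ⟨α, β, hαβ⟩ := exists_eq_add_of_reducedOp_eq (m := fun _ => sepConst i) ht ht'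
      ((contDiff_realEval sinSqPoly (n := 1)).differentiable (by simp)).differentiableOn
      (fun z hz => by simpa [realEval_sinSqPoly] using mod_cast hw z hz)
      (contDiff_realEval _).contDiffOn (contDiff_realEval _).contDiffOn hv
      (fun z _ => reducedOp_angularMode i 0 z) (fun z _ => reducedOp_angularMode i 1 z) h hk
      (fun z _ => wronskian_angularMode i z)
    exact ⟨![α, β], fun z hz => by simpa [Fin.sum_univ_two] using hαβ z hz⟩
  · rintro ⟨c, hc⟩ z hz
    rw [reducedOp_congr (Set.EqOn.eventuallyEq_of_mem hc (ht.mem_nhds hz)), hc z hz,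
      reducedOp_sum_const_mul _ fun j => (contDiff_realEval _).contDiffAt, Finset.mul_sum]
    exact Finset.sum_congr rfl fun j _ => by rw [reducedOp_angularMode, mul_left_comm]

lemma exists_eq_modeSum_iff (hs : IsOpen s) (hs₀ : s.Nonempty) (ht : IsOpen t)
    (ht' : IsPreconnected t) (hw : ∀ z ∈ t, 1 - z ^ 2 ≠ 0)
    (hΨ : ∀ r ∈ s, ContDiffOn ℝ 2 (Ψ r) t) :
    ((∀ z ∈ t, ∃ b : Fin 4 → ℂ, ∀ r ∈ s, Ψ r z = ∑ i : Fin 4, r ^ (i : ℕ) • b i) ∧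
        ∀ r ∈ s, ∀ z ∈ t, separatedOp a Ψ r z = 0) ↔
      ∃ c, ∀ r ∈ s, ∀ z ∈ t, Ψ r z = modeSum a c r z := by
  constructor
  · rintro ⟨hcubic, hsep⟩
    choose! b hb using hcubic
    let v : Fin 4 → ℝ → ℂ := fun i z => radialCoord a (b z) i
    have hv : ∀ r ∈ s, ∀ z ∈ t, Ψ r z = ∑ i, realEval (radialMode a i) r * v i z :=
      fun r hr z hz => (hb z hz r hr).trans (sum_radialCoord_mul_radialMode a (b z) r).symm
    have hv₂ : ∀ i, ContDiffOn ℝ 2 (v i) t :=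
      contDiffOn_of_sum_radialMode_mul (infinite_of_mem_nhds _ (hs.mem_nhds hs₀.some_mem))
        fun r hr => (hΨ r hr).congr fun z hz => (hv r hr z hz).symm
    choose c hc using fun i => (reducedOp_sinSqPoly_eq_iff ht ht' hw (hv₂ i) i).1
      ((separatedOp_eq_zero_iff hs hs₀ ht hv₂ hv).1 hsep i)
    refine ⟨c, fun r hr z hz => (hv r hr z hz).trans ?_⟩
    simp only [modeSum, hc _ z hz]
  · rintro ⟨c, hc⟩
    let v : Fin 4 → ℝ → ℂ := fun i z => ∑ j, c i j * realEval (angularMode i j) z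
    have hv₂ (i : Fin 4) : ContDiffOn ℝ 2 (v i) t :=
      (ContDiff.sum fun j _ => contDiff_const.mul (contDiff_realEval _)).contDiffOn
    refine ⟨fun z hz => ⟨(radialCoord a).symm fun i => v i z, fun r hr => ?_⟩,
      (separatedOp_eq_zero_iff hs hs₀ ht hv₂ hc).2 fun i =>
        (reducedOp_sinSqPoly_eq_iff ht ht' hw (hv₂ i) i).2 ⟨c i, fun _ _ => rfl⟩⟩
    rw [← sum_radialCoord_mul_radialMode a, Equiv.apply_symm_apply]
    exact hc r hr z hz

lemma eq_of_modeSum_eq (hs : s.Infinite) (ht : t.Infinite) {c d : Fin 4 → Fin 2 → ℂ}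
    (h : ∀ r ∈ s, ∀ z ∈ t, modeSum a c r z = modeSum a d r z) : c = d := by
  funext i
  exact eq_of_sum_mul_angularMode_eq ht fun z hz =>
    congrFun (eq_of_sum_radialMode_mul_eq hs fun r hr => h r hr z hz) i

end Classification

section Kernel

variable {a r z : ℝ} {s t : Set ℝ} {Φ : ℝ → ℝ → ℂ}

/-- The passage from the parameters of `PhiKer` to the amplitudes of the separated solutions.
The factor `21` comes from writing the part of the last term of `PhiKer` that is linear in `z` in
radial modes: with `R = r (r (r - 3) + 3 a²)`, one has
`r (r (r + 4) - 4 a²) = R + 7 (r² - a²) - 7 a² (r - 1)`. -/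
def kerAmplitude (a : ℝ) : (Fin 8 → ℂ) ≃ (Fin 4 → Fin 2 → ℂ) where
  toFun c := ![![c 0 + c 3 + a ^ 2 * c 6, c 2], ![c 1 + 21 * a ^ 2 * c 7, c 3],
    ![c 4 - 21 * c 7, c 6], ![c 5, c 7]]
  invFun d := ![d 0 0 - d 1 1 - a ^ 2 * d 2 1, d 1 0 - 21 * a ^ 2 * d 3 1, d 0 1, d 1 1,
    d 2 0 + 21 * d 3 1, d 3 0, d 2 1, d 3 1]
  left_inv c := by
    ext k
    fin_cases k <;> simp
    ring
  right_inv d := by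
    ext i j
    fin_cases i <;> fin_cases j <;> simp
    ring

lemma PhiKer_eq_modeSum (a : ℝ) (c : Fin 8 → ℂ) (r z : ℝ) :
    PhiKer a c r z = (1 - (z : ℂ) ^ 2)⁻¹ * modeSum a (kerAmplitude a c) r z := by
  rw [PhiKer, modeSum]
  congr 1
  simp [Fin.sum_univ_four, Fin.sum_univ_two, kerAmplitude, radialMode, angularMode, realEval]
  ring

lemma contDiffOn_reducedPotential_left {n : WithTop ℕ∞} (hΦ : ContDiffOn ℝ n (fun r => Φ r z) s) :
    ContDiffOn ℝ n (fun r => reducedPotential a Φ r z) s := by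
  simp only [reducedPotential, ← realEval_delPoly]
  exact ((contDiff_realEval _).pow 2).contDiffOn.mul (contDiffOn_const.mul hΦ)

lemma contDiffOn_reducedPotential_right {n : WithTop ℕ∞} (hΦ : ContDiffOn ℝ n (Φ r) t) :
    ContDiffOn ℝ n (reducedPotential a Φ r) t := by
  unfold reducedPotential
  simp only [← realEval_sinSqPoly]
  exact contDiffOn_const.mul ((contDiff_realEval _).contDiffOn.mul hΦ)

lemma existsUnique_kerAmplitude_iff (hs : s.Infinite) (ht : t.Infinite) {Ψ : ℝ → ℝ → ℂ} :
    (∃! c : Fin 8 → ℂ, ∀ r ∈ s, ∀ z ∈ t, Ψ r z = modeSum a (kerAmplitude a c) r z) ↔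
      ∃ c, ∀ r ∈ s, ∀ z ∈ t, Ψ r z = modeSum a c r z := by
  rw [← (kerAmplitude a).bijective.existsUnique_iff
    (p := fun c => ∀ r ∈ s, ∀ z ∈ t, Ψ r z = modeSum a c r z)]
  exact ⟨fun h => h.exists, fun ⟨c, hc⟩ => ⟨c, hc, fun d hd =>
    eq_of_modeSum_eq hs ht fun r hr z hz => (hd r hr z hz).symm.trans (hc r hr z hz)⟩⟩

lemma forall_eq_zpow_mul_PhiKer_iff (hΔ : ∀ r ∈ s, Del a r ≠ 0) (hw : ∀ z ∈ t, 1 - z ^ 2 ≠ 0)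
    (c : Fin 8 → ℂ) :
    (∀ r ∈ s, ∀ z ∈ t, Φ r z = (Del a r : ℂ) ^ (-2 : ℤ) * PhiKer a c r z) ↔
      ∀ r ∈ s, ∀ z ∈ t, reducedPotential a Φ r z = modeSum a (kerAmplitude a c) r z := by
  refine forall₄_congr fun r hr z hz => ?_
  have hr' : (Del a r : ℂ) ^ 2 ≠ 0 := pow_ne_zero 2 (mod_cast hΔ r hr)
  have hz' : 1 - (z : ℂ) ^ 2 ≠ 0 := mod_cast hw z hz
  rw [PhiKer_eq_modeSum, reducedPotential, zpow_neg, zpow_ofNat, eq_inv_mul_iff_mul_eq₀ hr',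
    eq_inv_mul_iff_mul_eq₀ hz', mul_left_comm]

lemma forall_iterate_deriv_eq_zero_iff (hs : IsOpen s) (hs' : IsPreconnected s)
    (hΔ : ∀ r ∈ s, Del a r ≠ 0) (hw : ∀ z ∈ t, 1 - z ^ 2 ≠ 0)
    (hΦ : ∀ z ∈ t, ContDiffOn ℝ 4 (fun r => Φ r z) s) :
    (∀ r ∈ s, ∀ z ∈ t,
        (Del a r : ℂ) ^ 2 * deriv^[4] (fun r' => (Del a r' : ℂ) ^ 2 * Φ r' z) r = 0) ↔
      ∀ z ∈ t, ∃ b : Fin 4 → ℂ, ∀ r ∈ s,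
        reducedPotential a Φ r z = ∑ i : Fin 4, r ^ (i : ℕ) • b i := by
  refine forall₂_comm.trans (forall₂_congr fun z hz => ?_)
  have hz' : 1 - (z : ℂ) ^ 2 ≠ 0 := mod_cast hw z hz
  rw [← iterate_deriv_eq_zero_iff_exists_sum_pow_smul hs hs'
    (contDiffOn_reducedPotential_left (hΦ z hz))]
  refine forall₂_congr fun r hr => ?_
  have hr' : (Del a r : ℂ) ≠ 0 := mod_cast hΔ r hr
  simp only [reducedPotential, mul_left_comm _ (1 - (z : ℂ) ^ 2), Function.iterate_succ_apply,
    Function.iterate_zero_apply, deriv_const_mul_field', mul_eq_zero, pow_eq_zero_iff two_ne_zero,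
    hr', hz', false_or]

lemma forall_TeukSAS_two_eq_zero_iff (hs : IsOpen s) (ht : IsOpen t)
    (hΔ : ∀ r ∈ s, Del a r ≠ 0) (hw : ∀ z ∈ t, 1 - z ^ 2 ≠ 0)
    (hΦr : ∀ z ∈ t, ContDiffOn ℝ 2 (fun r => Φ r z) s) (hΦz : ∀ r ∈ s, ContDiffOn ℝ 2 (Φ r) t) :
    (∀ r ∈ s, ∀ z ∈ t, TeukSAS a 2 Φ r z = 0) ↔
      ∀ r ∈ s, ∀ z ∈ t, separatedOp a (reducedPotential a Φ) r z = 0 := by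
  refine forall₄_congr fun r hr z hz => ?_
  have hr' : (Del a r : ℂ) ^ 2 ≠ 0 := pow_ne_zero 2 (mod_cast hΔ r hr)
  have hz' : 1 - (z : ℂ) ^ 2 ≠ 0 := mod_cast hw z hz
  rw [← mul_TeukSAS_two_eq_separatedOp (hΔ r hr) (hw z hz)
    ((hΦr z hz).contDiffAt (hs.mem_nhds hr)) ((hΦz r hr).contDiffAt (ht.mem_nhds hz)),
    mul_eq_zero_iff_left hr', mul_eq_zero_iff_left hz']

theorem SAS_kernel_classification_plus_general (a : ℝ) {s t : Set ℝ} (hs : IsOpen s)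
    (hs' : IsConnected s) (ht : IsOpen t) (ht' : IsConnected t) (hΔ : ∀ r ∈ s, Del a r ≠ 0)
    (hw : ∀ z ∈ t, 1 - z ^ 2 ≠ 0) (Φ : ℝ → ℝ → ℂ)
    (hΦr : ∀ z ∈ t, ContDiffOn ℝ 4 (fun r => Φ r z) s) (hΦz : ∀ r ∈ s, ContDiffOn ℝ 2 (Φ r) t) :
    ((∀ q ∈ s ×ˢ t,
        (Del a q.1 : ℂ) ^ 2 * deriv^[4] (fun r' => (Del a r' : ℂ) ^ 2 * Φ r' q.2) q.1 = 0) ∧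
      (∀ q ∈ s ×ˢ t, TeukSAS a 2 Φ q.1 q.2 = 0)) ↔
    (∃! c : Fin 8 → ℂ, ∀ q ∈ s ×ˢ t,
        Φ q.1 q.2 = (Del a q.1 : ℂ) ^ (-2 : ℤ) * PhiKer a c q.1 q.2) := by
  have hs_inf : s.Infinite := infinite_of_mem_nhds _ (hs.mem_nhds hs'.nonempty.some_mem)
  have ht_inf : t.Infinite := infinite_of_mem_nhds _ (ht.mem_nhds ht'.nonempty.some_mem)
  simp only [Set.forall_prod_set, forall_eq_zpow_mul_PhiKer_iff hΔ hw]
  rw [forall_iterate_deriv_eq_zero_iff hs hs'.isPreconnected hΔ hw hΦr,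
    forall_TeukSAS_two_eq_zero_iff hs ht hΔ hw (fun z hz => (hΦr z hz).of_le (by norm_num)) hΦz,
    exists_eq_modeSum_iff hs hs'.nonempty ht ht'.isPreconnected hw
      fun r hr => contDiffOn_reducedPotential_right (hΦz r hr),
    existsUnique_kerAmplitude_iff hs_inf ht_inf]

lemma Del_pos_of_rplus_lt (h : rplus a < r) : 0 < Del a r := by
  have hsq : 1 - a ^ 2 < (r - 1) ^ 2 := Real.lt_sq_of_sqrt_lt (by rw [rplus] at h; linarith)
  rw [Del]
  linarith

end Kernel

/-- **Classification of the stationary axisymmetric kernel (`s = +2`).**  A smooth `Φ` on `U`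
satisfies `Δ²∂_r⁴(Δ²Φ) = 0` and `𝒯₊₂Φ = 0` iff `Φ = Δ^{−2}Φ_Ker(c)` for a (then unique)
`c ∈ ℂ⁸`; the `s = +2` stationary axisymmetric kernel is `Δ^{−2}` times the `s = −2` one. -/
theorem SAS_kernel_classification_plus (a : ℝ) (ha : |a| < 1) (Φ : ℝ → ℝ → ℂ)
    (hsmooth : ContDiffOn ℝ (⊤ : ℕ∞) (fun q : ℝ × ℝ => Φ q.1 q.2) (U2 a)) :
    ((∀ q ∈ U2 a,
        (Del a q.1 : ℂ) ^ 2 * deriv^[4] (fun r' => (Del a r' : ℂ) ^ 2 * Φ r' q.2) q.1 = 0) ∧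
      (∀ q ∈ U2 a, TeukSAS a 2 Φ q.1 q.2 = 0)) ↔
    (∃! c : Fin 8 → ℂ, ∀ q ∈ U2 a,
        Φ q.1 q.2 = (Del a q.1 : ℂ) ^ (-2 : ℤ) * PhiKer a c q.1 q.2) := by
  have hΔ : ∀ r ∈ Set.Ioi (rplus a), Del a r ≠ 0 := fun r hr => (Del_pos_of_rplus_lt hr).ne'
  have hw : ∀ z ∈ Set.Ioo (-1 : ℝ) 1, 1 - z ^ 2 ≠ 0 := fun z hz => by nlinarith [hz.1, hz.2]
  exact SAS_kernel_classification_plus_general a isOpen_Ioi isConnected_Ioi isOpen_Ioo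
    (isConnected_Ioo (by norm_num)) hΔ hw Φ
    (fun z hz => contDiffOn_infty.1
      (hsmooth.comp (contDiff_prodMk_left z).contDiffOn fun r hr => ⟨hr, hz⟩) 4)
    (fun r hr => contDiffOn_infty.1
      (hsmooth.comp (contDiff_prodMk_right r).contDiffOn fun z hz => ⟨hr, hz⟩) 2)

end Kerr
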